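/- Let α > 1, let V be a reflexive real Banach space such that both V and V* are uniformly convex, let A : V → Set V* be a maximal-monotone multivalued operator, and fix λ > 0. Define the generalized Yosida approximation A_λ(x) := λ^{-1} j(x − x_λ), where x_λ is the unique solution of the resolvent equation 0 ∈ J(x_λ − x) + λ A(x_λ). Then A_λ : V → V* is demicontinuous: if u_n → u strongly in V, then A_λ(u_n) → A_λ(u) in the weak topology of V*. -/

import Mathlib

open NormedSpace Filter Topology

/-- The generalized duality mapping with exponent `α` on a real normed space `V`:
`J(u) = {v ∈ V* | ⟨v,u⟩ = ‖u‖^α = ‖v‖^{α/(α-1)}}`. -/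
def genJ (α : ℝ) (V : Type*) [NormedAddCommGroup V] [NormedSpace ℝ V] (u : V) :
    Set (StrongDual ℝ V) :=
  {v : StrongDual ℝ V | v u = ‖u‖ ^ α ∧ ‖v‖ ^ (α / (α - 1)) = ‖u‖ ^ α}

/-- A multivalued operator `A : V → Set V*` is monotone if
`⟨v₁ - v₂, u₁ - u₂⟩ ≥ 0` for all `v₁ ∈ A u₁`, `v₂ ∈ A u₂`. -/
def MonotoneOp {V : Type*} [NormedAddCommGroup V] [NormedSpace ℝ V]
    (A : V → Set (StrongDual ℝ V)) : Prop :=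
  ∀ u₁ u₂ : V, ∀ v₁ ∈ A u₁, ∀ v₂ ∈ A u₂, 0 ≤ (v₁ - v₂) (u₁ - u₂)

/-- A monotone multivalued operator is maximal monotone if its graph is not properly
contained in the graph of any other monotone operator. -/
def MaximalMonotoneOp {V : Type*} [NormedAddCommGroup V] [NormedSpace ℝ V]
    (A : V → Set (StrongDual ℝ V)) : Prop :=
  MonotoneOp A ∧
    ∀ B : V → Set (StrongDual ℝ V), MonotoneOp B → (∀ u, A u ⊆ B u) → ∀ u, B u = A u

lemma aux_uc {E : Type*} [NormedAddCommGroup E] [NormedSpace ℝ E] [UniformConvexSpace E]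
    (v : ℕ → E) (v0 : E) (g : ℕ → ℝ) (h1 : Tendsto (fun n => ‖v n‖) atTop (𝓝 ‖v0‖))
    (h2 : Tendsto g atTop (𝓝 (2 * ‖v0‖))) (h3 : ∀ n, g n ≤ ‖v n + v0‖) :
    Tendsto v atTop (𝓝 v0) := by
  rcases eq_or_ne v0 0 with h0 | h0
  · subst h0
    rw [norm_zero] at h1
    exact tendsto_zero_iff_norm_tendsto_zero.mpr h1
  have hS : 0 < ‖v0‖ := norm_pos_iff.mpr h0
  rw [Metric.tendsto_atTop']
  intro ε hε
  obtain ⟨δ, hδ, H⟩ := exists_forall_closed_ball_dist_add_le_two_mul_sub E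
    (show 0 < ε / 2 by linarith) ‖v0‖
  have e1 : ∀ᶠ n in atTop, |‖v n‖ - ‖v0‖| < min (ε / 2) (δ / 2) := by
    have := Metric.tendsto_nhds.mp h1 (min (ε / 2) (δ / 2)) (by positivity)
    simpa [Real.dist_eq] using this
  have e2 : ∀ᶠ n in atTop, 2 * ‖v0‖ - δ / 2 < g n :=
    h2.eventually (lt_mem_nhds (by linarith))
  have e3 : ∀ᶠ n in atTop, 0 < ‖v n‖ := h1.eventually (lt_mem_nhds hS)
  have e : ∀ᶠ n in atTop, dist (v n) v0 < ε := by
    filter_upwards [e1, e2, e3] with n a1 a2 a3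
    set y := (‖v0‖ / ‖v n‖) • v n with hy
    have hyn : ‖y‖ = ‖v0‖ := by
      rw [hy, norm_smul, Real.norm_of_nonneg (by positivity)]
      field_simp
    have hd : ‖v n - y‖ = |‖v n‖ - ‖v0‖| := by
      have : v n - y = ((‖v n‖ - ‖v0‖) / ‖v n‖) • v n := by
        rw [hy, sub_div, sub_smul, div_self a3.ne', one_smul]
      rw [this, norm_smul, Real.norm_eq_abs, abs_div, abs_of_pos a3]
      field_simp
    rw [dist_eq_norm]
    by_contra hc
    push Not at hc
    have a4 := lt_min_iff.mp a1
    have t1 : ‖v n - v0‖ ≤ ‖v n - y‖ + ‖y - v0‖ := norm_sub_le_norm_sub_add_norm_sub _ _ _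
    have t2 : ‖v n + v0‖ ≤ ‖v n - y‖ + ‖y + v0‖ := by
      have := norm_add_le (v n - y) (y + v0)
      rwa [show v n - y + (y + v0) = v n + v0 by abel] at this
    have := H hyn.le le_rfl (by linarith : ε / 2 ≤ ‖y - v0‖)
    linarith [h3 n]
  obtain ⟨N, hN⟩ := eventually_atTop.mp e
  exact ⟨N, fun n hn => hN n hn.le⟩

lemma aux_norm {α : ℝ} (hα : 1 < α) {V : Type*} [NormedAddCommGroup V] [NormedSpace ℝ V]
    {u : V} {v : StrongDual ℝ V} (h : v ∈ genJ α V u) :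
    ‖v‖ = ‖u‖ ^ (α - 1) ∧ v u = ‖u‖ ^ (α - 1) * ‖u‖ := by
  have h2 := h.2
  constructor
  · have : (‖v‖ ^ (α / (α - 1))) ^ ((α - 1) / α) = (‖u‖ ^ α) ^ ((α - 1) / α) := by rw [h2]
    rw [← Real.rpow_mul (norm_nonneg _), ← Real.rpow_mul (norm_nonneg _)] at this
    have ha : α - 1 ≠ 0 := by linarith
    have hb : α ≠ 0 := by linarith
    rw [show α / (α - 1) * ((α - 1) / α) = 1 by field_simp,
      show α * ((α - 1) / α) = α - 1 by field_simp, Real.rpow_one] at this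
    exact this
  · rw [h.1]
    rcases eq_or_ne ‖u‖ 0 with h0 | h0
    · rw [h0, Real.zero_rpow (by linarith)]; simp
    · rw [← Real.rpow_add_one h0]; congr 1; ring

lemma aux_conv {α : ℝ} (hα : 1 < α) {V : Type*} [NormedAddCommGroup V] [NormedSpace ℝ V]
    [UniformConvexSpace (StrongDual ℝ V)]
    (w : ℕ → V) (w0 : V) (v : ℕ → StrongDual ℝ V) (v0 : StrongDual ℝ V)
    (hv : ∀ n, v n ∈ genJ α V (w n)) (hv0 : v0 ∈ genJ α V w0)
    (hw : Tendsto (fun n => ‖w n‖) atTop (𝓝 ‖w0‖))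
    (hz : Tendsto (fun n => (v n - v0) (w n - w0)) atTop (𝓝 0)) :
    Tendsto v atTop (𝓝 v0) := by
  have N := fun n => aux_norm hα (hv n)
  obtain ⟨N1, N2⟩ := aux_norm hα hv0
  have hp : Tendsto (fun n => ‖w n‖ ^ (α - 1)) atTop (𝓝 (‖w0‖ ^ (α - 1))) :=
    hw.rpow_const (Or.inr (by linarith))
  have hvn : Tendsto (fun n => ‖v n‖) atTop (𝓝 ‖v0‖) := by
    rw [N1]; simpa only [fun n => (N n).1] using hp
  rcases eq_or_ne w0 0 with h0 | h0
  · have : v0 = 0 := by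
      rw [← norm_eq_zero, N1, h0, norm_zero, Real.zero_rpow (by linarith)]
    subst this
    rw [norm_zero] at hvn
    exact tendsto_zero_iff_norm_tendsto_zero.mpr hvn
  have hs : 0 < ‖w0‖ := norm_pos_iff.mpr h0
  refine aux_uc v v0 (fun n => (‖w n‖ ^ (α - 1) * ‖w n‖ + 2 * (‖w0‖ ^ (α - 1) * ‖w0‖)
      - ‖w0‖ ^ (α - 1) * ‖w n‖ - (v n - v0) (w n - w0)) / ‖w0‖) hvn ?_ ?_
  · have := ((((hp.mul hw).add_const (2 * (‖w0‖ ^ (α - 1) * ‖w0‖))).sub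
      (hw.const_mul (‖w0‖ ^ (α - 1)))).sub hz).div_const ‖w0‖
    convert this using 2
    rw [N1]; field_simp; ring
  · intro n
    rw [div_le_iff₀ hs]
    have b1 : (v n + v0) w0 ≤ ‖v n + v0‖ * ‖w0‖ :=
      (le_abs_self _).trans ((v n + v0).le_opNorm w0)
    have b2 : v0 (w n) ≤ ‖v0‖ * ‖w n‖ := (le_abs_self _).trans (v0.le_opNorm (w n))
    rw [N1] at b2
    have n2 := (N n).2
    simp only [add_apply, sub_apply, map_sub] at b1 ⊢
    linarith

lemma aux_real {p : ℝ} (hp : 0 < p) (r e : ℕ → ℝ) (s : ℝ) (hr : ∀ n, 0 ≤ r n) (hs : 0 ≤ s)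
    (he : Tendsto e atTop (𝓝 0))
    (h : ∀ n, (r n ^ p - s ^ p) * (r n - s) ≤ (r n ^ p + s ^ p) * e n) :
    Tendsto r atTop (𝓝 s) := by
  refine tendsto_order.mpr ⟨fun a ha => ?_, fun b hb => ?_⟩
  · rcases lt_or_ge a 0 with h0 | h0
    · exact Eventually.of_forall fun n => h0.trans_le (hr n)
    have hap : a ^ p < s ^ p := Real.rpow_lt_rpow h0 ha hp
    have hsp : 0 < s ^ p := (Real.rpow_nonneg h0 p).trans_lt hap
    have : ∀ᶠ n in atTop, e n < (s ^ p - a ^ p) * (s - a) / (2 * s ^ p) :=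
      he.eventually (gt_mem_nhds (div_pos (mul_pos (by linarith) (by linarith)) (by linarith)))
    filter_upwards [this] with n hn
    by_contra hc
    push Not at hc
    rw [lt_div_iff₀ (by linarith)] at hn
    have k1 : r n ^ p ≤ a ^ p := Real.rpow_le_rpow (hr n) hc hp.le
    have k0 := Real.rpow_nonneg (hr n) p
    have k2 : (s ^ p - a ^ p) * (s - a) ≤ (s ^ p - r n ^ p) * (s - r n) :=
      mul_le_mul (by linarith) (by linarith) (by linarith) (by linarith)
    have k3 : 0 < (s ^ p - a ^ p) * (s - a) := mul_pos (by linarith) (by linarith)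
    have k4 := h n
    have k5 : 0 ≤ e n := by
      by_contra hneg
      push Not at hneg
      nlinarith
    nlinarith
  · have hb0 : 0 ≤ b := hs.trans hb.le
    have hbp : s ^ p < b ^ p := Real.rpow_lt_rpow hs hb hp
    have hsp : 0 ≤ s ^ p := Real.rpow_nonneg hs p
    have : ∀ᶠ n in atTop, e n < (b ^ p - s ^ p) * (b - s) / (b ^ p + s ^ p) :=
      he.eventually (gt_mem_nhds (div_pos (mul_pos (by linarith) (by linarith)) (by linarith)))
    filter_upwards [this] with n hn
    by_contra hc
    push Not at hc
    have k1 : b ^ p ≤ r n ^ p := Real.rpow_le_rpow hb0 hc hp.le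
    have k4 := h n
    have k6 : (b ^ p - s ^ p) * (b - s) / (b ^ p + s ^ p) * (r n ^ p + s ^ p)
        ≤ (r n ^ p - s ^ p) * (b - s) := by
      rw [div_mul_eq_mul_div, div_le_iff₀ (by linarith)]
      have : (b ^ p - s ^ p) * (r n ^ p + s ^ p) ≤ (r n ^ p - s ^ p) * (b ^ p + s ^ p) := by
        nlinarith
      nlinarith [mul_le_mul_of_nonneg_right this (by linarith : 0 ≤ b - s)]
    have k7 : (r n ^ p - s ^ p) * (b - s) ≤ (r n ^ p - s ^ p) * (r n - s) :=
      mul_le_mul_of_nonneg_left (by linarith) (by linarith)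
    have k8 := mul_lt_mul_of_pos_right hn (by linarith : 0 < r n ^ p + s ^ p)
    linarith

/-- the generalized Yosida approximation `A_λ(x) = λ⁻¹ j(x - R x)`
of a maximal monotone operator on a reflexive Banach space with uniformly convex
space and dual is demicontinuous: strong convergence in `V` implies weak
convergence of the approximations in `V*`. -/
theorem statement15 (α : ℝ) (hα : 1 < α) (V : Type*) [NormedAddCommGroup V]
    [NormedSpace ℝ V] [CompleteSpace V] [UniformConvexSpace V]
    [UniformConvexSpace (StrongDual ℝ V)]
    (hrefl : Function.Surjective (inclusionInDoubleDual ℝ V))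
    (j : V → StrongDual ℝ V) (hj : ∀ u : V, j u ∈ genJ α V u)
    (A : V → Set (StrongDual ℝ V)) (hA : MaximalMonotoneOp A)
    (lam : ℝ) (hlam : 0 < lam)
    (R : V → V) (hR : ∀ x : V, (-lam⁻¹) • j (R x - x) ∈ A (R x))
    (u : ℕ → V) (x : V)
    (hconv : Tendsto (fun n => ‖u n - x‖) atTop (𝓝 0)) :
    ∀ φ : StrongDual ℝ (StrongDual ℝ V),
      Tendsto (fun n => φ (lam⁻¹ • j (u n - R (u n)))) atTop
        (𝓝 (φ (lam⁻¹ • j (x - R x)))) := by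
  have hneg : ∀ w : V, j (-w) = - j w := by
    intro w
    have m : - j w ∈ genJ α V (-w) := by
      refine ⟨?_, ?_⟩
      · simpa using (hj w).1
      · simpa using (hj w).2
    have := aux_conv hα (fun _ : ℕ => -w) (-w) (fun _ => j (-w)) (- j w)
      (fun _ => hj _) m tendsto_const_nhds (by simp)
    exact tendsto_nhds_unique tendsto_const_nhds this
  have hR' : ∀ y : V, lam⁻¹ • j (y - R y) ∈ A (R y) := by
    intro y
    have := hR y
    rwa [← neg_sub, hneg, smul_neg, neg_smul, neg_neg] at this
  have key : ∀ n, (j (u n - R (u n)) - j (x - R x)) ((u n - R (u n)) - (x - R x)) ≤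
      (j (u n - R (u n)) - j (x - R x)) (u n - x) := by
    intro n
    have := hA.1 _ _ _ (hR' (u n)) _ (hR' x)
    have e : (lam⁻¹ • j (u n - R (u n)) - lam⁻¹ • j (x - R x)) (R (u n) - R x) =
        lam⁻¹ * (j (u n - R (u n)) - j (x - R x)) (R (u n) - R x) := by
      simp only [sub_apply, smul_apply, smul_eq_mul]
      ring
    rw [e] at this
    have h2 := nonneg_of_mul_nonneg_right this (inv_pos.mpr hlam)
    rw [show (u n - R (u n)) - (x - R x) = (u n - x) - (R (u n) - R x) by abel, map_sub _ (u n - x)]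
    linarith
  have hlow : ∀ n, (‖u n - R (u n)‖ ^ (α - 1) - ‖x - R x‖ ^ (α - 1)) *
      (‖u n - R (u n)‖ - ‖x - R x‖) ≤
      (j (u n - R (u n)) - j (x - R x)) ((u n - R (u n)) - (x - R x)) := by
    intro n
    obtain ⟨a1, a2⟩ := aux_norm hα (hj (u n - R (u n)))
    obtain ⟨b1, b2⟩ := aux_norm hα (hj (x - R x))
    generalize u n - R (u n) = w at *
    generalize x - R x = z at *
    have c1 := (le_abs_self _).trans ((j w).le_opNorm z)
    have c2 := (le_abs_self _).trans ((j z).le_opNorm w)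
    rw [a1] at c1
    rw [b1] at c2
    simp only [sub_apply, map_sub]
    linarith
  have hup : ∀ n, (j (u n - R (u n)) - j (x - R x)) (u n - x) ≤
      (‖u n - R (u n)‖ ^ (α - 1) + ‖x - R x‖ ^ (α - 1)) * ‖u n - x‖ := by
    intro n
    refine (le_abs_self _).trans (((j (u n - R (u n)) - j (x - R x)).le_opNorm _).trans ?_)
    rw [← (aux_norm hα (hj (u n - R (u n)))).1, ← (aux_norm hα (hj (x - R x))).1]
    exact mul_le_mul_of_nonneg_right (norm_sub_le _ _) (norm_nonneg _)
  have hr : Tendsto (fun n => ‖u n - R (u n)‖) atTop (𝓝 ‖x - R x‖) :=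
    aux_real (p := α - 1) (by linarith) _ _ _ (fun n => norm_nonneg _) (norm_nonneg _) hconv
      (fun n => (hlow n).trans ((key n).trans (hup n)))
  have hrp : Tendsto (fun n => ‖u n - R (u n)‖ ^ (α - 1)) atTop (𝓝 (‖x - R x‖ ^ (α - 1))) :=
    hr.rpow_const (Or.inr (by linarith))
  have hz : Tendsto (fun n => (j (u n - R (u n)) - j (x - R x)) ((u n - R (u n)) - (x - R x)))
      atTop (𝓝 0) := by
    refine tendsto_of_tendsto_of_tendsto_of_le_of_le ?_ ?_ hlow
      (fun n => (key n).trans (hup n))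
    · simpa using (hrp.sub_const (‖x - R x‖ ^ (α - 1))).mul (hr.sub_const ‖x - R x‖)
    · simpa using (hrp.add_const (‖x - R x‖ ^ (α - 1))).mul hconv
  have hfin := aux_conv hα _ _ _ _ (fun n => hj (u n - R (u n))) (hj (x - R x)) hr hz
  intro φ
  exact (φ.continuous.tendsto _).comp (hfin.const_smul lam⁻¹)
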